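/- Let G ≤ SL(2,ℝ) be a non-uniform lattice such that ∞ is a cusp of G. Then, as subsets of [0,+∞], the set { 2·height_G(γ(x,y)) : x, y ∈ ℝ ∪ {∞}, x ≠ y } of doubled essential heights of all complete hyperbolic geodesics equals the Lagrange spectrum 𝓛(G,∞) = { L_G(α) : α ∈ ℝ }. -/

import Mathlib

open scoped ENNReal
open MeasureTheory

noncomputable section

/-- `SL(2,ℝ)`. -/
abbrev SL2R := Matrix.SpecialLinearGroup (Fin 2) ℝ

/-- The entry in position (1,1) of a matrix in `SL(2,ℝ)`. -/
def entryA (g : SL2R) : ℝ := g.1 0 0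

/-- The entry in position (1,2) of a matrix in `SL(2,ℝ)`. -/
def entryB (g : SL2R) : ℝ := g.1 0 1

/-- The entry in position (2,1) of a matrix in `SL(2,ℝ)`. -/
def entryC (g : SL2R) : ℝ := g.1 1 0

/-- The entry in position (2,2) of a matrix in `SL(2,ℝ)`. -/
def entryD (g : SL2R) : ℝ := g.1 1 1

/-- The Möbius action of `g ∈ SL(2,ℝ)` on the complex plane (well defined on the
upper half-plane): `z ↦ (az+b)/(cz+d)`. -/
def moeb (g : SL2R) (z : ℂ) : ℂ :=
  ((entryA g : ℂ) * z + (entryB g : ℂ)) / ((entryC g : ℂ) * z + (entryD g : ℂ))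

/-- The upper half-plane `ℍ = {z : 0 < Im z}`, as a subset of `ℂ`. -/
def UHP : Set ℂ := {z : ℂ | 0 < z.im}

/-- Hyperbolic area of a subset of the upper half-plane: `∫∫ dx dy / y²`. -/
def hypArea (s : Set ℂ) : ℝ≥0∞ := ∫⁻ z in s, ENNReal.ofReal (1 / z.im ^ 2)

/-- A subgroup of `SL(2,ℝ)` is discrete if each of its elements is isolated
(in the topology of coefficientwise convergence). -/
def IsDiscreteSubgroup (G : Subgroup SL2R) : Prop :=
  ∀ g ∈ G, ∃ ε > (0 : ℝ), ∀ h ∈ G, (∀ i j, |h.1 i j - g.1 i j| < ε) → h = g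

/-- `F` is a (measurable) fundamental domain for the action of `G` on the upper
half-plane: the `G`-translates of `F` cover `ℍ`, and for every `g ∈ G` acting
nontrivially, `F` and `g·F` overlap in hyperbolic area zero. -/
def IsFundDom (G : Subgroup SL2R) (F : Set ℂ) : Prop :=
  F ⊆ UHP ∧ MeasurableSet F ∧
    (∀ z ∈ UHP, ∃ g ∈ G, moeb g z ∈ F) ∧
    (∀ g ∈ G, (∃ z ∈ UHP, moeb g z ≠ z) → hypArea (F ∩ (moeb g '' F)) = 0)

/-- `G ≤ SL(2,ℝ)` is a non-uniform lattice: it is discrete, it admits a fundamental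
domain of finite hyperbolic area, and the quotient `G\ℍ` is not compact (no compact
subset of `ℍ` meets every orbit). -/
def IsNonUniformLattice (G : Subgroup SL2R) : Prop :=
  IsDiscreteSubgroup G ∧
    (∃ F : Set ℂ, IsFundDom G F ∧ hypArea F < ⊤) ∧
    ¬ ∃ K : Set ℂ, IsCompact K ∧ K ⊆ UHP ∧ ∀ z ∈ UHP, ∃ g ∈ G, moeb g z ∈ K

/-- `∞` is a cusp of `G`: `G` contains a parabolic element `[[1,μ],[0,1]]` with `μ ≠ 0`. -/
def HasCuspAtInfty (G : Subgroup SL2R) : Prop :=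
  ∃ μ : ℝ, μ ≠ 0 ∧ ∃ p : SL2R, p.1 = !![1, μ; 0, 1] ∧ p ∈ G

/-- The set of `k > 0` such that there are infinitely many `g ∈ G`, with pairwise
distinct values `g·∞ = a(g)/c(g) ∈ ℝ`, with `|α − g·∞| < 1/(k c(g)²)`. -/
def LagrangeSet (G : Subgroup SL2R) (α : ℝ) : Set ℝ :=
  {k : ℝ | 0 < k ∧
    {v : ℝ | ∃ g ∈ G, entryC g ≠ 0 ∧ v = entryA g / entryC g ∧
      |α - v| < 1 / (k * entryC g ^ 2)}.Infinite}

/-- The Lagrange value `L_G(α) ∈ [0,∞]` (with the convention `sup ∅ = 0`). -/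
def LagrangeValue (G : Subgroup SL2R) (α : ℝ) : ℝ≥0∞ :=
  sSup (ENNReal.ofReal '' LagrangeSet G α)

/-- The Lagrange spectrum of `G` at `∞`. -/
def LagrangeSpectrum (G : Subgroup SL2R) : Set ℝ≥0∞ :=
  {L : ℝ≥0∞ | ∃ α : ℝ, LagrangeValue G α = L}

/-- The boundary `ℝ ∪ {∞}` of the upper half-plane, with `none` playing the role of `∞`,
and the Möbius action of `SL(2,ℝ)` on it. -/
def bdAct (g : SL2R) (p : Option ℝ) : Option ℝ :=
  match p with
  | none => if entryC g = 0 then none else some (entryA g / entryC g)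
  | some x =>
      if entryC g * x + entryD g = 0 then none
      else some ((entryA g * x + entryB g) / (entryC g * x + entryD g))

/-- The naive height of the hyperbolic geodesic `γ(x,y)` with endpoints `x, y` on the
boundary `ℝ ∪ {∞}`: it is `|x−y|/2` if both endpoints are real, and `+∞` otherwise. -/
def naiveHeight (x y : Option ℝ) : ℝ≥0∞ :=
  match x, y with
  | some u, some v => ENNReal.ofReal (|u - v| / 2)
  | _, _ => ⊤

/-- `g` and `h` are equivalent modulo infinity: `g = k h` for some `k ∈ G` fixing `∞`. -/
def EquivModInf (G : Subgroup SL2R) (g h : SL2R) : Prop :=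
  ∃ k ∈ G, entryC k = 0 ∧ g = k * h

/-- The set of `k > 0` such that `height(g(γ(x,y))) ≥ k` for infinitely many pairwise
inequivalent (modulo infinity) elements `g ∈ G`. -/
def essHeightSet (G : Subgroup SL2R) (x y : Option ℝ) : Set ℝ :=
  {k : ℝ | 0 < k ∧ ∃ S : Set SL2R, S.Infinite ∧
    (∀ g ∈ S, g ∈ G ∧ ENNReal.ofReal k ≤ naiveHeight (bdAct g x) (bdAct g y)) ∧
    S.Pairwise fun g h => ¬ EquivModInf G g h}

/-- The essential height `height_G(γ(x,y)) ∈ [0,∞]` of the geodesic with boundary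
endpoints `x, y ∈ ℝ ∪ {∞}` (with the convention `sup ∅ = 0`). -/
def essHeight (G : Subgroup SL2R) (x y : Option ℝ) : ℝ≥0∞ :=
  sSup (ENNReal.ofReal '' essHeightSet G x y)

/-!
Both sides are limits superior over the elements `g ∈ G` for which `g·∞` is real, taken as `g·∞`
leaves every finite set: the Lagrange value of `α` is the limit superior of
`1 / (c(g)² |α - g·∞|)`, and the essential height of `γ(x,y)` is that of `height(g⁻¹(γ(x,y)))`.
A direct computation gives `2 height(g⁻¹(γ(∞,α))) = 1 / (c(g)² |α - g·∞|)`, so vertical geodesics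
realise exactly the Lagrange spectrum.

For real `x ≠ y`, twice the height of `g⁻¹(γ(x,y))` is the Euclidean distance `|g⁻¹x - g⁻¹y|`. The
triangle inequality through `g⁻¹∞` shows that it differs from the larger of the two distances
`|g⁻¹∞ - g⁻¹x|`, `|g⁻¹∞ - g⁻¹y|` by at most the smaller one. The smaller one tends to `0`: by
Shimizu's lemma the nonzero `|c(g)|` are bounded below, so only finitely many orbit points `g·∞`
keep `c(g)² max(|x - g·∞|, |y - g·∞|)` bounded. Hence the essential height of `γ(x,y)` is the
larger of those of `γ(∞,x)` and `γ(∞,y)`.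
-/

open Filter Topology

section SetFilterPreliminaries

theorem exists_infinite_injOn_subset_iff {ι κ : Type*} {f : ι → κ} {T : Set ι} :
    (∃ S ⊆ T, S.Infinite ∧ S.InjOn f) ↔ (f '' T).Infinite := by
  constructor
  · rintro ⟨S, hST, hinf, hinj⟩
    exact (hinf.image hinj).mono (Set.image_mono hST)
  · intro h
    obtain ⟨S, hST, hbij⟩ := Set.exists_subset_bijOn T f
    exact ⟨S, hST, .of_image f (hbij.image_eq ▸ h), hbij.injOn⟩

theorem finite_of_isBounded_of_pairwise_le_dist {X : Type*} [MetricSpace X] [ProperSpace X]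
    {s : Set X} {ε : ℝ} (hε : 0 < ε) (hb : Bornology.IsBounded s)
    (hs : s.Pairwise fun x y => ε ≤ dist x y) : s.Finite := by
  have hcompact : IsCompact s :=
    Metric.isCompact_of_isClosed_isBounded (Metric.isClosed_of_pairwise_le_dist hε hs) hb
  have hdiscrete : DiscreteTopology s := .of_forall_le_dist hε fun x y hxy =>
    hs x.2 y.2 (Subtype.coe_injective.ne hxy)
  exact hcompact.finite ⟨hdiscrete⟩

theorem sSup_ofReal_image_eq_limsup {ι : Type*} {l : Filter ι} {u : ι → ℝ≥0∞} {A : Set ℝ}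
    (hle : ∀ k ∈ A, ∃ᶠ i in l, ENNReal.ofReal k ≤ u i)
    (hlt : ∀ k > 0, (∃ᶠ i in l, ENNReal.ofReal k < u i) → k ∈ A) :
    sSup (ENNReal.ofReal '' A) = limsup u l := by
  apply le_antisymm
  · refine sSup_le ?_
    rintro _ ⟨k, hk, rfl⟩
    exact le_limsup_of_frequently_le' (hle k hk)
  · refine le_of_forall_lt fun b hb => ?_
    obtain ⟨k, hbk, hk⟩ := ENNReal.lt_iff_exists_real_btwn.1 hb |>.imp fun _ h => h.2
    have hk_pos : 0 < k := ENNReal.ofReal_pos.1 (pos_of_gt hbk)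
    have hkA : k ∈ A := hlt k hk_pos (frequently_lt_of_lt_limsup (h := hk))
    exact hbk.trans_le (le_sSup ⟨k, hkA, rfl⟩)

theorem limsup_le_limsup_of_le_add_of_tendsto_zero {ι : Type*} {l : Filter ι} {u v e : ι → ℝ≥0∞}
    (huv : ∀ i, u i ≤ v i + e i) (he : Tendsto e l (𝓝 0)) : limsup u l ≤ limsup v l :=
  (limsup_le_limsup (.of_forall huv)).trans_eq (ENNReal.limsup_add_of_right_tendsto_zero he v)

end SetFilterPreliminaries

section Entries

variable (g h : SL2R)

theorem entryA_mul_entryD_sub_entryB_mul_entryC :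
    entryA g * entryD g - entryB g * entryC g = 1 := by
  rw [← g.2, Matrix.det_fin_two]; rfl

theorem entryC_mul : entryC (g * h) = entryC g * entryA h + entryD g * entryC h := by
  simp [entryA, entryD, entryC, Matrix.mul_apply, Fin.sum_univ_two]

theorem entryA_inv : entryA g⁻¹ = entryD g := by
  simp [entryA, entryD, Matrix.adjugate_fin_two]

theorem entryB_inv : entryB g⁻¹ = -entryB g := by
  simp [entryB, Matrix.adjugate_fin_two]

theorem entryC_inv : entryC g⁻¹ = -entryC g := by
  simp [entryC, Matrix.adjugate_fin_two]

theorem entryD_inv : entryD g⁻¹ = entryA g := by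
  simp [entryA, entryD, Matrix.adjugate_fin_two]

end Entries

/-! ### Shimizu's lemma -/

section Shimizu

/-- Shimizu's sequence `h₀ = g`, `hₙ₊₁ = hₙ t hₙ⁻¹`. When `t` is a translation by `μ` and
`|c(g) μ| < 1` it converges to `t`, which a discrete group does not allow unless `c(g) = 0`. -/
def shimizuSeq (t g : SL2R) : ℕ → SL2R
  | 0 => g
  | n + 1 => shimizuSeq t g n * t * (shimizuSeq t g n)⁻¹

theorem shimizuSeq_mem {G : Subgroup SL2R} {t g : SL2R} (ht : t ∈ G) (hg : g ∈ G) (n : ℕ) :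
    shimizuSeq t g n ∈ G := by
  induction n with
  | zero => exact hg
  | succ n ih => exact G.mul_mem (G.mul_mem ih ht) (G.inv_mem ih)

theorem coe_conj_translation {t : SL2R} {μ : ℝ} (ht : t.1 = !![1, μ; 0, 1]) (h : SL2R) :
    (h * t * h⁻¹).1 = !![1 - entryA h * (entryC h * μ), entryA h ^ 2 * μ;
      -(entryC h * (entryC h * μ)), 1 + entryA h * (entryC h * μ)] := by
  have hdet := entryA_mul_entryD_sub_entryB_mul_entryC h
  rw [Matrix.SpecialLinearGroup.coe_mul, Matrix.SpecialLinearGroup.coe_mul,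
    Matrix.SpecialLinearGroup.coe_inv, Matrix.adjugate_fin_two, ht, Matrix.eta_fin_two h.1]
  simp only [entryA, entryB, entryC, entryD] at hdet ⊢
  ext i j
  fin_cases i <;> fin_cases j <;>
    simp only [Fin.zero_eta, Fin.mk_one, Matrix.mul_fin_two, Matrix.of_apply, Matrix.cons_val]
  · linear_combination hdet
  · ring
  · ring
  · linear_combination hdet

variable {t g : SL2R} {μ : ℝ}

theorem entryA_shimizuSeq_succ (ht : t.1 = !![1, μ; 0, 1]) (n : ℕ) :
    entryA (shimizuSeq t g (n + 1)) =
      1 - entryA (shimizuSeq t g n) * (entryC (shimizuSeq t g n) * μ) := by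
  simp [entryA, shimizuSeq, coe_conj_translation ht]

theorem abs_entryC_shimizuSeq_mul (ht : t.1 = !![1, μ; 0, 1]) (n : ℕ) :
    |entryC (shimizuSeq t g n) * μ| = |entryC g * μ| ^ 2 ^ n := by
  induction n with
  | zero => simp [shimizuSeq]
  | succ n ih =>
    have hC : entryC (shimizuSeq t g (n + 1)) =
        -(entryC (shimizuSeq t g n) * (entryC (shimizuSeq t g n) * μ)) := by
      simp [entryC, shimizuSeq, coe_conj_translation ht]
    rw [pow_succ 2 n, pow_mul, ← ih, hC, ← abs_pow, ← abs_neg]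
    ring_nf

theorem abs_entryA_shimizuSeq_le (ht : t.1 = !![1, μ; 0, 1]) (hg : |entryC g * μ| ≤ 1) (n : ℕ) :
    |entryA (shimizuSeq t g n)| ≤ |entryA g| + n := by
  induction n with
  | zero => simp [shimizuSeq]
  | succ n ih =>
    have hC : |entryC (shimizuSeq t g n) * μ| ≤ 1 := by
      rw [abs_entryC_shimizuSeq_mul ht]; exact pow_le_one₀ (abs_nonneg _) hg
    calc |entryA (shimizuSeq t g (n + 1))|
        ≤ |1| + |entryA (shimizuSeq t g n)| * |entryC (shimizuSeq t g n) * μ| := by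
          rw [entryA_shimizuSeq_succ ht, ← abs_mul]; exact abs_sub _ _
      _ ≤ 1 + |entryA (shimizuSeq t g n)| := by
          rw [abs_one]; gcongr; exact mul_le_of_le_one_right (abs_nonneg _) hC
      _ ≤ |entryA g| + (n + 1 : ℕ) := by push_cast; linarith

theorem abs_entryC_shimizuSeq_mul_le (ht : t.1 = !![1, μ; 0, 1]) (hg : |entryC g * μ| ≤ 1)
    (n : ℕ) : |entryC (shimizuSeq t g n) * μ| ≤ |entryC g * μ| ^ n := by
  rw [abs_entryC_shimizuSeq_mul ht]
  exact pow_le_pow_of_le_one (abs_nonneg _) hg Nat.lt_two_pow_self.le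

theorem tendsto_entryC_shimizuSeq_mul (ht : t.1 = !![1, μ; 0, 1]) (hg : |entryC g * μ| < 1) :
    Tendsto (fun n => entryC (shimizuSeq t g n) * μ) atTop (𝓝 0) :=
  squeeze_zero_norm (abs_entryC_shimizuSeq_mul_le ht hg.le)
    (tendsto_pow_atTop_nhds_zero_of_lt_one (abs_nonneg _) hg)

-- `a(hₙ)` grows at most linearly while `c(hₙ)` decays geometrically.
theorem tendsto_entryA_mul_entryC_shimizuSeq_mul (ht : t.1 = !![1, μ; 0, 1])
    (hg : |entryC g * μ| < 1) :
    Tendsto (fun n => entryA (shimizuSeq t g n) * (entryC (shimizuSeq t g n) * μ))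
      atTop (𝓝 0) := by
  have hlin : Tendsto (fun n : ℕ => (|entryA g| + n) * |entryC g * μ| ^ n) atTop (𝓝 0) := by
    have hpow := tendsto_pow_atTop_nhds_zero_of_lt_one (abs_nonneg _) hg
    have hmul := tendsto_self_mul_const_pow_of_lt_one (abs_nonneg _) hg
    simpa only [add_mul, mul_zero, add_zero] using (hpow.const_mul |entryA g|).add hmul
  refine squeeze_zero_norm (fun n => ?_) hlin
  rw [Real.norm_eq_abs, abs_mul]
  exact mul_le_mul (abs_entryA_shimizuSeq_le ht hg.le n) (abs_entryC_shimizuSeq_mul_le ht hg.le n)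
    (abs_nonneg _) (by positivity)

theorem tendsto_shimizuSeq (ht : t.1 = !![1, μ; 0, 1]) (hg : |entryC g * μ| < 1) (hμ : μ ≠ 0)
    (i j : Fin 2) :
    Tendsto (fun n => (shimizuSeq t g n).1 i j) atTop (𝓝 (t.1 i j)) := by
  have hCμ := tendsto_entryC_shimizuSeq_mul ht hg
  have hAC := tendsto_entryA_mul_entryC_shimizuSeq_mul ht hg
  have hC : Tendsto (fun n => entryC (shimizuSeq t g n)) atTop (𝓝 0) := by
    simpa [hμ] using hCμ.div_const μ
  have hA : Tendsto (fun n => entryA (shimizuSeq t g n)) atTop (𝓝 1) := by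
    rw [← tendsto_add_atTop_iff_nat 1]
    simpa only [entryA_shimizuSeq_succ ht, sub_zero] using hAC.const_sub 1
  rw [← tendsto_add_atTop_iff_nat 1]
  simp only [shimizuSeq, coe_conj_translation ht, ht]
  fin_cases i <;> fin_cases j
  · simpa using hAC.const_sub 1
  · simpa using (hA.pow 2).mul_const μ
  · simpa using (hC.mul hCμ).neg
  · simpa using hAC.const_add 1

end Shimizu

section DiscreteWithCusp

variable {G : Subgroup SL2R}

theorem eventually_eq_of_tendsto_of_isDiscreteSubgroup (hG : IsDiscreteSubgroup G)
    {ι : Type*} {l : Filter ι} {h : ι → SL2R} (hh : ∀ i, h i ∈ G) {t : SL2R} (ht : t ∈ G)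
    (hlim : ∀ i j, Tendsto (fun n => (h n).1 i j) l (𝓝 (t.1 i j))) : ∀ᶠ n in l, h n = t := by
  obtain ⟨ε, hε, hisol⟩ := hG t ht
  have hclose : ∀ᶠ n in l, ∀ i j, |(h n).1 i j - t.1 i j| < ε := by
    simp only [eventually_all]
    exact fun i j => (Metric.tendsto_nhds.1 (hlim i j)) ε hε
  exact hclose.mono fun n hn => hisol _ (hh n) hn

theorem one_le_abs_entryC_mul_of_isDiscreteSubgroup (hG : IsDiscreteSubgroup G)
    {t : SL2R} (htG : t ∈ G) {μ : ℝ} (ht : t.1 = !![1, μ; 0, 1]) (hμ : μ ≠ 0)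
    {g : SL2R} (hgG : g ∈ G) (hg : entryC g ≠ 0) : 1 ≤ |entryC g * μ| := by
  by_contra! hlt
  obtain ⟨n, hn⟩ := (eventually_eq_of_tendsto_of_isDiscreteSubgroup hG (shimizuSeq_mem htG hgG)
    htG (tendsto_shimizuSeq ht hlt hμ)).exists
  have hpos : 0 < |entryC (shimizuSeq t g n) * μ| := by
    rw [abs_entryC_shimizuSeq_mul ht]; positivity
  have hzero : entryC (shimizuSeq t g n) = 0 := by simp [hn, entryC, ht]
  simp [hzero] at hpos

/-- The nonzero values of `|c(g)|`, `g ∈ G`, are bounded below; equivalently, the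
`G`-translates of the horoballs based at `∞` have bounded diameter. -/
def HasEntryCGap (G : Subgroup SL2R) : Prop :=
  ∃ c₀ > 0, ∀ g ∈ G, entryC g ≠ 0 → c₀ ≤ |entryC g|

theorem hasEntryCGap_of_isDiscreteSubgroup_of_hasCuspAtInfty (hG : IsDiscreteSubgroup G)
    (hcusp : HasCuspAtInfty G) : HasEntryCGap G := by
  obtain ⟨μ, hμ, t, ht, htG⟩ := hcusp
  refine ⟨|μ|⁻¹, by positivity, fun g hgG hg => ?_⟩
  have hshimizu := one_le_abs_entryC_mul_of_isDiscreteSubgroup hG htG ht hμ hgG hg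
  rwa [abs_mul, ← inv_le_iff_one_le_mul₀ (abs_pos.2 hμ)] at hshimizu

end DiscreteWithCusp

/-! ### The orbit of `∞` -/

section Orbit

/-- The boundary point `g·∞` as a real number, with junk value `0` when `g·∞ = ∞`. -/
def orbitPt (g : SL2R) : ℝ := entryA g / entryC g

/-- The filter on `SL(2,ℝ)` along which `g ∈ G` moves `∞` to real points `g·∞` that leave every
finite set. Limits superior along it express both the Lagrange value and the essential height. -/
def orbitFilter (G : Subgroup SL2R) : Filter SL2R :=
  comap orbitPt cofinite ⊓ 𝓟 {g | g ∈ G ∧ entryC g ≠ 0}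

variable {G : Subgroup SL2R}

theorem frequently_orbitFilter {P : SL2R → Prop} :
    (∃ᶠ g in orbitFilter G, P g) ↔
      {v | ∃ g ∈ G, entryC g ≠ 0 ∧ v = orbitPt g ∧ P g}.Infinite := by
  rw [orbitFilter, frequently_inf_principal, frequently_comap, frequently_cofinite_iff_infinite]
  congr! 3
  grind

theorem eventually_entryC_ne_zero_orbitFilter : ∀ᶠ g in orbitFilter G, entryC g ≠ 0 :=
  mem_inf_of_right fun _ hg => hg.2

theorem infinite_image_bdAct_none_iff {P : SL2R → Prop} :
    ((bdAct · none) '' {g | g ∈ G ∧ P g}).Infinite ↔ ∃ᶠ g in orbitFilter G, P g := by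
  rw [frequently_orbitFilter]
  constructor
  · intro hinf hfin
    refine hinf (((hfin.image some).insert none).subset ?_)
    rintro _ ⟨g, ⟨hgG, hP⟩, rfl⟩
    by_cases hg : entryC g = 0
    · simp [bdAct, hg]
    · exact .inr ⟨orbitPt g, ⟨g, hgG, hg, rfl, hP⟩, by simp [bdAct, hg, orbitPt]⟩
  · intro hinf
    refine (hinf.image (Option.some_injective ℝ).injOn).mono ?_
    rintro _ ⟨_, ⟨g, hgG, hg, rfl, hP⟩, rfl⟩
    exact ⟨g, ⟨hgG, hP⟩, by simp [bdAct, hg, orbitPt]⟩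

theorem entryC_inv_mul {g h : SL2R} (hg : entryC g ≠ 0) (hh : entryC h ≠ 0) :
    entryC (g⁻¹ * h) = entryC g * entryC h * (orbitPt g - orbitPt h) := by
  rw [entryC_mul, entryC_inv, entryD_inv, orbitPt, orbitPt]
  field_simp
  ring

-- `c(g⁻¹h) = c(g) c(h) (g·∞ - h·∞)`, so the gap separates the points `g·∞` with `c(g)` bounded.
theorem HasEntryCGap.finite_orbitPt (hG : HasEntryCGap G) (M R : ℝ) :
    {v | ∃ g ∈ G, entryC g ≠ 0 ∧ v = orbitPt g ∧ entryC g ^ 2 ≤ M ∧ |v| ≤ R}.Finite := by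
  obtain ⟨c₀, hc₀, hgap⟩ := hG
  have hM : 0 < |M| + 1 := by positivity
  refine finite_of_isBounded_of_pairwise_le_dist (ε := c₀ / (|M| + 1)) (by positivity) ?_ ?_
  · refine (Metric.isBounded_closedBall (x := (0 : ℝ)) (r := R)).subset ?_
    rintro v ⟨-, -, -, -, -, hv⟩
    simpa using hv
  · rintro _ ⟨g, hgG, hg, rfl, hgM, -⟩ _ ⟨h, hhG, hh, rfl, hhM, -⟩ hne
    have hC := entryC_inv_mul hg hh
    have hC_ne : entryC (g⁻¹ * h) ≠ 0 := by
      rw [hC]; exact mul_ne_zero (mul_ne_zero hg hh) (sub_ne_zero.2 hne)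
    have hgh : |entryC g * entryC h| ≤ |M| + 1 := by
      rw [abs_le]
      constructor <;>
        nlinarith [le_abs_self M, sq_nonneg (entryC g - entryC h), sq_nonneg (entryC g + entryC h)]
    rw [div_le_iff₀' hM, Real.dist_eq]
    calc c₀ ≤ |entryC (g⁻¹ * h)| := hgap _ (G.mul_mem (G.inv_mem hgG) hhG) hC_ne
      _ = |entryC g * entryC h| * |orbitPt g - orbitPt h| := by rw [hC, abs_mul]
      _ ≤ (|M| + 1) * |orbitPt g - orbitPt h| := by gcongr

theorem HasEntryCGap.tendsto_entryC_sq_mul_max (hG : HasEntryCGap G) {x y : ℝ} (hxy : x ≠ y) :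
    Tendsto (fun g => entryC g ^ 2 * max |x - orbitPt g| |y - orbitPt g|)
      (orbitFilter G) atTop := by
  have hD : 0 < |x - y| := abs_pos.2 (sub_ne_zero.2 hxy)
  refine tendsto_atTop.2 fun K => ?_
  by_contra hfreq
  obtain ⟨c₀, hc₀, hgap⟩ := id hG
  refine frequently_orbitFilter.1 (not_eventually.1 hfreq)
    ((hG.finite_orbitPt (2 * K / |x - y|) (|x| + K / c₀ ^ 2)).subset ?_)
  rintro v ⟨g, hgG, hg, rfl, hlt⟩
  set m := max |x - orbitPt g| |y - orbitPt g|
  have hxm : |x - orbitPt g| ≤ m := le_max_left _ _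
  have hDm : |x - y| ≤ 2 * m := by
    have hym : |y - orbitPt g| ≤ m := le_max_right _ _
    have := abs_sub_le x (orbitPt g) y
    rw [abs_sub_comm (orbitPt g) y] at this
    linarith
  have hcm : entryC g ^ 2 * m < K := not_le.1 hlt
  refine ⟨g, hgG, hg, rfl, ?_, ?_⟩
  · rw [le_div_iff₀ hD]
    nlinarith [mul_le_mul_of_nonneg_left hDm (sq_nonneg (entryC g))]
  · have hc : c₀ ^ 2 ≤ entryC g ^ 2 := by
      rw [← sq_abs (entryC g)]; gcongr; exact hgap g hgG hg
    have hm : |x - orbitPt g| ≤ K / c₀ ^ 2 := by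
      rw [le_div_iff₀' (by positivity)]
      exact (mul_le_mul hc hxm (abs_nonneg _) (sq_nonneg _)).trans hcm.le
    have := abs_sub_abs_le_abs_sub (orbitPt g) x
    rw [abs_sub_comm] at this
    linarith

end Orbit

section Lagrange

/-- The quality `1 / (c(g)² |α - g·∞|) ∈ [0,∞]` of `g·∞` as an approximation of `α`, equal to `∞`
when `g·∞ = α`. Its limit superior along the orbit of `∞` is the Lagrange value. -/
def approxQuality (α : ℝ) (g : SL2R) : ℝ≥0∞ :=
  (ENNReal.ofReal (entryC g ^ 2 * |α - orbitPt g|))⁻¹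

variable {G : Subgroup SL2R}

theorem ofReal_lt_approxQuality_iff {α k : ℝ} (hk : 0 < k) {g : SL2R} (hg : entryC g ≠ 0) :
    ENNReal.ofReal k < approxQuality α g ↔ |α - orbitPt g| < 1 / (k * entryC g ^ 2) := by
  rw [approxQuality, ENNReal.lt_inv_iff_lt_inv, ← ENNReal.ofReal_inv_of_pos hk,
    ENNReal.ofReal_lt_ofReal_iff (inv_pos.2 hk), lt_div_iff₀ (by positivity), ← one_div,
    lt_div_iff₀ hk]
  ring_nf

theorem mem_lagrangeSet_iff {α k : ℝ} : k ∈ LagrangeSet G α ↔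
    0 < k ∧ ∃ᶠ g in orbitFilter G, ENNReal.ofReal k < approxQuality α g := by
  refine and_congr_right fun hk => ?_
  rw [frequently_orbitFilter]
  refine iff_of_eq (congrArg Set.Infinite (Set.ext fun v => exists_congr fun g =>
    and_congr_right fun _ => and_congr_right fun hg => and_congr_right ?_))
  rintro rfl
  exact (ofReal_lt_approxQuality_iff hk hg).symm

theorem lagrangeValue_eq_limsup (G : Subgroup SL2R) (α : ℝ) :
    LagrangeValue G α = limsup (approxQuality α) (orbitFilter G) :=
  sSup_ofReal_image_eq_limsup
    (fun _ hk => (mem_lagrangeSet_iff.1 hk).2.mono fun _ => le_of_lt)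
    (fun _ hk hfreq => mem_lagrangeSet_iff.2 ⟨hk, hfreq⟩)

theorem HasEntryCGap.tendsto_min_approxQuality (hG : HasEntryCGap G) {x y : ℝ} (hxy : x ≠ y) :
    Tendsto (fun g => min (approxQuality x g) (approxQuality y g)) (orbitFilter G) (𝓝 0) := by
  have hmin (g : SL2R) : min (approxQuality x g) (approxQuality y g) =
      (ENNReal.ofReal (entryC g ^ 2 * max |x - orbitPt g| |y - orbitPt g|))⁻¹ := by
    rw [mul_max_of_nonneg _ _ (sq_nonneg _), ENNReal.ofReal_max]
    exact (ENNReal.inv_strictAnti.antitone.map_max).symm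
  simp only [hmin]
  rw [← ENNReal.inv_top, tendsto_inv_iff]
  exact ENNReal.tendsto_ofReal_atTop.comp (hG.tendsto_entryC_sq_mul_max hxy)

end Lagrange

/-! ### Heights of geodesics -/

section Height

theorem naiveHeight_comm (u v : Option ℝ) : naiveHeight u v = naiveHeight v u := by
  cases u <;> cases v <;> simp [naiveHeight, abs_sub_comm]

theorem naiveHeight_triangle (u v w : Option ℝ) :
    naiveHeight u w ≤ naiveHeight u v + naiveHeight v w := by
  rcases u with _ | u <;> rcases v with _ | v <;> rcases w with _ | w <;> simp only [naiveHeight,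
    top_add, add_top, le_top]
  rw [← ENNReal.ofReal_add (by positivity) (by positivity)]
  exact ENNReal.ofReal_le_ofReal (by linarith [abs_sub_le u v w])

theorem two_mul_naiveHeight_bdAct_inv_none_some {g : SL2R} (hg : entryC g ≠ 0) (y : ℝ) :
    2 * naiveHeight (bdAct g⁻¹ none) (bdAct g⁻¹ (some y)) = approxQuality y g := by
  have hdet := entryA_mul_entryD_sub_entryB_mul_entryC g
  simp only [bdAct, entryA_inv, entryB_inv, entryC_inv, entryD_inv, neg_eq_zero, hg, if_false]
  by_cases hy : -entryC g * y + entryA g = 0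
  · have hy_eq : y = orbitPt g := by rw [orbitPt]; field_simp; linarith
    rw [if_pos hy]
    simp [naiveHeight, approxQuality, ← hy_eq]
  · have hdist : entryC g ^ 2 * (y - orbitPt g) = -entryC g * (-entryC g * y + entryA g) := by
      rw [orbitPt]; field_simp; ring
    have hdiff : entryD g / -entryC g -
        (entryD g * y + -entryB g) / (-entryC g * y + entryA g) =
        (entryC g ^ 2 * (y - orbitPt g))⁻¹ := by
      rw [hdist, div_sub_div _ _ (neg_ne_zero.2 hg) hy, inv_eq_one_div]
      congr 1
      linear_combination hdet
    have hpos : 0 < |entryC g ^ 2 * (y - orbitPt g)| := by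
      rw [hdist]; exact abs_pos.2 (mul_ne_zero (neg_ne_zero.2 hg) hy)
    have hquality : approxQuality y g = ENNReal.ofReal |(entryC g ^ 2 * (y - orbitPt g))⁻¹| := by
      rw [abs_inv, ENNReal.ofReal_inv_of_pos hpos, abs_mul, abs_of_nonneg (sq_nonneg _),
        approxQuality]
    rw [if_neg hy, naiveHeight, hdiff, hquality, ← ENNReal.ofReal_ofNat 2,
      ← ENNReal.ofReal_mul zero_le_two, mul_div_cancel₀ _ two_ne_zero]

end Height

section EssentialHeight

variable {G : Subgroup SL2R}

theorem equivModInf_iff_entryC_mul_inv {g h : SL2R} (hg : g ∈ G) (hh : h ∈ G) :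
    EquivModInf G g h ↔ entryC (g * h⁻¹) = 0 := by
  constructor
  · rintro ⟨k, -, hk, rfl⟩
    simpa using hk
  · exact fun hgh => ⟨g * h⁻¹, G.mul_mem hg (G.inv_mem hh), hgh, by simp⟩

theorem bdAct_none_eq_iff (g h : SL2R) :
    bdAct g none = bdAct h none ↔ entryC (g⁻¹ * h) = 0 := by
  have hg_det := entryA_mul_entryD_sub_entryB_mul_entryC g
  have hh_det := entryA_mul_entryD_sub_entryB_mul_entryC h
  rw [entryC_mul, entryC_inv, entryD_inv]
  by_cases hg : entryC g = 0 <;> by_cases hh : entryC h = 0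
  · simp [bdAct, hg, hh]
  · have : entryA g ≠ 0 := by rintro hA; simp [hg, hA] at hg_det
    simp [bdAct, hg, hh, this]
  · have : entryA h ≠ 0 := by rintro hA; simp [hh, hA] at hh_det
    simp [bdAct, hg, hh, this]
  · simp only [bdAct, hg, hh, if_false, Option.some.injEq]
    rw [div_eq_div_iff hg hh]
    constructor <;> intro heq <;> linarith

theorem equivModInf_iff_bdAct_inv_none {g h : SL2R} (hg : g ∈ G) (hh : h ∈ G) :
    EquivModInf G g h ↔ bdAct g⁻¹ none = bdAct h⁻¹ none := by
  rw [equivModInf_iff_entryC_mul_inv hg hh, bdAct_none_eq_iff, inv_inv]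

theorem exists_infinite_pairwise_not_equivModInf_iff {P : SL2R → Prop} :
    (∃ S : Set SL2R, S.Infinite ∧ (∀ g ∈ S, g ∈ G ∧ P g) ∧
      S.Pairwise fun g h => ¬ EquivModInf G g h) ↔ ∃ᶠ g in orbitFilter G, P g⁻¹ := by
  have himage : (fun g : SL2R => bdAct g⁻¹ none) '' {g | g ∈ G ∧ P g} =
      (bdAct · none) '' {g | g ∈ G ∧ P g⁻¹} := by
    ext v
    constructor <;> rintro ⟨g, ⟨hgG, hP⟩, rfl⟩ <;>
      exact ⟨g⁻¹, ⟨G.inv_mem hgG, by simpa using hP⟩, by simp⟩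
  rw [← infinite_image_bdAct_none_iff, ← himage, ← exists_infinite_injOn_subset_iff]
  refine exists_congr fun S => ?_
  rw [and_left_comm]
  refine and_congr_right fun hS => and_congr_right fun _ => ?_
  rw [Set.injOn_iff_pairwise_ne]
  constructor <;> intro hpw g hg h hh hne <;>
    simpa [equivModInf_iff_bdAct_inv_none (hS g hg).1 (hS h hh).1] using hpw hg hh hne

theorem essHeight_eq_limsup (G : Subgroup SL2R) (x y : Option ℝ) : essHeight G x y =
    limsup (fun g => naiveHeight (bdAct g⁻¹ x) (bdAct g⁻¹ y)) (orbitFilter G) :=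
  sSup_ofReal_image_eq_limsup
    (fun _ hk => exists_infinite_pairwise_not_equivModInf_iff.1 hk.2)
    (fun _ hk hfreq => ⟨hk, exists_infinite_pairwise_not_equivModInf_iff.2 <|
      hfreq.mono fun _ => le_of_lt⟩)

theorem essHeight_comm (G : Subgroup SL2R) (x y : Option ℝ) :
    essHeight G x y = essHeight G y x := by
  simp only [essHeight_eq_limsup, naiveHeight_comm]

theorem two_mul_essHeight_none_some (G : Subgroup SL2R) (α : ℝ) :
    2 * essHeight G none (some α) = LagrangeValue G α := by
  rw [essHeight_eq_limsup, lagrangeValue_eq_limsup,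
    ← ENNReal.limsup_const_mul_of_ne_top ENNReal.ofNat_ne_top]
  exact limsup_congr (eventually_entryC_ne_zero_orbitFilter.mono fun _ hg =>
    two_mul_naiveHeight_bdAct_inv_none_some hg α)

theorem HasEntryCGap.tendsto_min_naiveHeight (hG : HasEntryCGap G) {x y : ℝ} (hxy : x ≠ y) :
    Tendsto (fun g => min (naiveHeight (bdAct g⁻¹ none) (bdAct g⁻¹ (some x)))
      (naiveHeight (bdAct g⁻¹ none) (bdAct g⁻¹ (some y)))) (orbitFilter G) (𝓝 0) := by
  refine tendsto_of_tendsto_of_tendsto_of_le_of_le' tendsto_const_nhds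
    (hG.tendsto_min_approxQuality hxy) (.of_forall fun _ => bot_le) ?_
  filter_upwards [eventually_entryC_ne_zero_orbitFilter] with g hg
  simp only [← two_mul_naiveHeight_bdAct_inv_none_some hg]
  gcongr <;> exact le_mul_of_one_le_left' one_le_two

-- The heights `X`, `Y`, `H` of the images of `γ(∞,x)`, `γ(∞,y)`, `γ(x,y)` satisfy
-- `max X Y ≤ H + min X Y` and `H ≤ max X Y + min X Y`.
theorem HasEntryCGap.essHeight_some_some (hG : HasEntryCGap G) {x y : ℝ} (hxy : x ≠ y) :
    essHeight G (some x) (some y) =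
      max (essHeight G none (some x)) (essHeight G none (some y)) := by
  rw [essHeight_eq_limsup, essHeight_eq_limsup, essHeight_eq_limsup, ← limsup_max]
  have hmin := hG.tendsto_min_naiveHeight hxy
  apply le_antisymm <;>
    refine limsup_le_limsup_of_le_add_of_tendsto_zero (fun g => ?_) hmin
  · rw [max_add_min, naiveHeight_comm (bdAct g⁻¹ none)]
    exact naiveHeight_triangle _ _ _
  · rcases le_total (naiveHeight (bdAct g⁻¹ none) (bdAct g⁻¹ (some x)))
      (naiveHeight (bdAct g⁻¹ none) (bdAct g⁻¹ (some y))) with hle | hle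
    · rw [max_eq_right hle, min_eq_left hle, add_comm]
      exact naiveHeight_triangle _ _ _
    · rw [max_eq_left hle, min_eq_right hle, add_comm, naiveHeight_comm (bdAct g⁻¹ (some x))]
      exact naiveHeight_triangle _ _ _

end EssentialHeight

theorem spectrum_eq_doubled_essential_heights_general {G : Subgroup SL2R} (hG : HasEntryCGap G) :
    {L : ℝ≥0∞ | ∃ x y : Option ℝ, x ≠ y ∧ L = 2 * essHeight G x y} = LagrangeSpectrum G := by
  ext L
  constructor
  · rintro ⟨_ | x, _ | y, hxy, rfl⟩
    · exact absurd rfl hxy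
    · exact ⟨y, (two_mul_essHeight_none_some G y).symm⟩
    · exact ⟨x, by rw [essHeight_comm, two_mul_essHeight_none_some]⟩
    · rw [hG.essHeight_some_some (by simpa using hxy)]
      rcases max_choice (essHeight G none (some x)) (essHeight G none (some y)) with hmax | hmax
      · exact ⟨x, by rw [hmax, two_mul_essHeight_none_some]⟩
      · exact ⟨y, by rw [hmax, two_mul_essHeight_none_some]⟩
  · rintro ⟨α, rfl⟩
    exact ⟨none, some α, Option.some_ne_none α |>.symm, (two_mul_essHeight_none_some G α).symm⟩

/-- The set of doubled essential heights of all complete hyperbolic geodesics equals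
the Lagrange spectrum `𝓛(G,∞)`. -/
theorem spectrum_eq_doubled_essential_heights (G : Subgroup SL2R)
    (hG : IsNonUniformLattice G) (hcusp : HasCuspAtInfty G) :
    {L : ℝ≥0∞ | ∃ x y : Option ℝ, x ≠ y ∧ L = 2 * essHeight G x y} =
      LagrangeSpectrum G :=
  spectrum_eq_doubled_essential_heights_general
    (hasEntryCGap_of_isDiscreteSubgroup_of_hasCuspAtInfty hG.1 hcusp)
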